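/- (Blowup rate, Theorem of Section 3.) Let ξ < 0, α > 0, and let a solve ä(s) = ξ/a(s)^{1/3} with a(0) = a₀ > 0, ȧ(0) = a₁, positive on a maximal interval [0,S) with S < ∞ and a(s) → 0 as s → S⁻. Set θ = a₁²/2 − (3/2)ξa₀^{2/3} > 0. Then a(s) ≤ √(2θ)·(S − s) for s near S; consequently, for ρ(s,0) = α/a(s)^{1/3}, one has liminf_{s→S⁻} ρ(s,0)·(S − s)^{1/3} ≥ α/(2θ)^{1/6} > 0. -/

import Mathlib

/-!
The energy `a'² / 2 - (3/2) ξ a^{2/3}` is conserved and equals `θ`; since `ξ < 0`, this bounds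
`a'` below by `-√(2θ)`. Hence `s ↦ a s + √(2θ) s` is nondecreasing, and comparing with its limit
`√(2θ) S` gives `a s ≤ √(2θ) (S - s)`. Taking cube roots yields the pointwise lower bound on the
density. As the `liminf` is taken in `ℝ`, it is meaningful only if the rescaled density does not
tend to infinity; this follows from `a'' < 0`: the graph of `a` lies above the chord joining
`(0, a 0)` and `(S, 0)`, so `(S - s) / a s` is bounded.
-/

open Filter Set Topology

lemma energy_eq {ξ S : ℝ} {a a' : ℝ → ℝ}
    (hpos : ∀ s : ℝ, 0 ≤ s → s < S → 0 < a s)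
    (hda : ∀ s : ℝ, 0 ≤ s → s < S → HasDerivAt a (a' s) s)
    (hode : ∀ s : ℝ, 0 ≤ s → s < S → HasDerivAt a' (ξ / (a s) ^ ((1:ℝ)/3)) s)
    {s : ℝ} (hs0 : 0 ≤ s) (hsS : s < S) :
    a' s ^ 2 / 2 - 3 / 2 * ξ * a s ^ ((2:ℝ)/3)
      = a' 0 ^ 2 / 2 - 3 / 2 * ξ * a 0 ^ ((2:ℝ)/3) := by
  have hE : ∀ t ∈ Icc 0 s,
      HasDerivAt (fun t => a' t ^ 2 / 2 - 3 / 2 * ξ * a t ^ ((2:ℝ)/3)) 0 t := by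
    intro t ht
    have htS := ht.2.trans_lt hsS
    have hp := hpos t ht.1 htS
    have h2 := ((hda t ht.1 htS).rpow_const (p := (2:ℝ)/3) (Or.inl hp.ne')).const_mul (3 / 2 * ξ)
    refine ((((hode t ht.1 htS).pow 2).div_const 2).sub h2).congr_deriv ?_
    have : a t ^ ((2:ℝ)/3 - 1) = (a t ^ ((1:ℝ)/3))⁻¹ := by
      rw [← Real.rpow_neg hp.le]; norm_num
    rw [this]
    simp
    ring
  refine constant_of_has_deriv_right_zero
    (fun t ht => (hE t ht).continuousAt.continuousWithinAt)
    (fun t ht => (hE t (Ico_subset_Icc_self ht)).hasDerivWithinAt) s ⟨hs0, le_rfl⟩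

/-- If `a' ≥ -M` and `a` vanishes at `S⁻`, then `a` lies below the line of slope `-M` through
`(S, 0)`. -/
lemma le_line_of_neg_le_deriv {S M : ℝ} {a a' : ℝ → ℝ} (hS : 0 < S)
    (hda : ∀ s : ℝ, 0 ≤ s → s < S → HasDerivAt a (a' s) s)
    (hlim : Tendsto a (𝓝[Ico 0 S] S) (𝓝 0))
    (hM : ∀ s : ℝ, 0 ≤ s → s < S → -M ≤ a' s)
    {s : ℝ} (hs0 : 0 ≤ s) (hsS : s < S) : a s ≤ M * (S - s) := by
  have hD : ∀ t ∈ Ico 0 S, HasDerivAt (fun t => a t + M * t) (a' t + M) t := fun t ht => by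
    exact ((hda t ht.1 ht.2).add ((hasDerivAt_id t).const_mul M)).congr_deriv (by simp)
  have hmono : MonotoneOn (fun t => a t + M * t) (Ico 0 S) := by
    refine monotoneOn_of_deriv_nonneg (convex_Ico 0 S)
      (fun t ht => (hD t ht).continuousAt.continuousWithinAt)
      (fun t ht => (hD t (interior_subset ht)).differentiableAt.differentiableWithinAt) ?_
    intro t ht
    have ht' := interior_subset ht
    rw [(hD t ht').deriv]
    linarith [hM t ht'.1 ht'.2]
  have hl : Tendsto (fun t => a t + M * t) (𝓝[Ico 0 S] S) (𝓝 (0 + M * S)) :=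
    hlim.add ((continuous_const.mul continuous_id).continuousAt.tendsto.mono_left
      nhdsWithin_le_nhds)
  rw [nhdsWithin_Ico_eq_nhdsLT hS] at hl
  have hle : a s + M * s ≤ 0 + M * S := by
    refine ge_of_tendsto hl ?_
    filter_upwards [Ioo_mem_nhdsLT hsS] with t ht
    exact hmono ⟨hs0, hsS⟩ ⟨hs0.trans ht.1.le, ht.2⟩ ht.1.le
  linarith

/-- A positive concave function on `[0, S)` lies above the chord from `(0, a 0)` to `(S, 0)`. -/
lemma chord_le_of_concaveOn {S : ℝ} {a : ℝ → ℝ} (hS : 0 < S)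
    (hpos : ∀ s : ℝ, 0 ≤ s → s < S → 0 < a s) (hc : ConcaveOn ℝ (Ico 0 S) a)
    {s : ℝ} (hs0 : 0 ≤ s) (hsS : s < S) : a 0 * (S - s) ≤ a s * S := by
  have hl : Tendsto (fun t => a s * t - a 0 * (t - s)) (𝓝[<] S)
      (𝓝 (a s * S - a 0 * (S - s))) :=
    (by fun_prop : Continuous fun t => a s * t - a 0 * (t - s)).continuousAt.tendsto.mono_left
      nhdsWithin_le_nhds
  have : 0 ≤ a s * S - a 0 * (S - s) := by
    refine ge_of_tendsto hl ?_
    filter_upwards [Ioo_mem_nhdsLT hsS] with t ht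
    have ht0 : 0 < t := hs0.trans_lt ht.1
    have h := hc.2 (show (0:ℝ) ∈ Ico 0 S from ⟨le_rfl, hS⟩) (show t ∈ Ico 0 S from ⟨ht0.le, ht.2⟩)
      (show 0 ≤ (t - s) / t from div_nonneg (by linarith [ht.1]) ht0.le)
      (show 0 ≤ s / t from div_nonneg hs0 ht0.le) (by field_simp; ring)
    have e : ((t - s) / t) • (0:ℝ) + (s / t) • t = s := by simp [ht0.ne']
    rw [e, smul_eq_mul, smul_eq_mul] at h
    have h2 : (t - s) / t * a 0 ≤ a s :=
      le_trans (le_add_of_nonneg_right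
        (mul_nonneg (div_nonneg hs0 ht0.le) (hpos t ht0.le ht.2).le)) h
    rw [div_mul_eq_mul_div, div_le_iff₀ ht0] at h2
    linarith
  linarith


/-- blowup rate: for ξ < 0, α > 0 and a a positive solution of
ä = ξ/a^{1/3} on [0,S) with a(s) → 0 as s → S⁻, setting
θ = a₁²/2 − (3/2)ξ a₀^{2/3} > 0, one has a(s) ≤ √(2θ)(S−s) for s near S, and
liminf_{s→S⁻} (α/a(s)^{1/3})·(S−s)^{1/3} ≥ α/(2θ)^{1/6} > 0. -/
theorem stmt14 (ξ α a₀ a₁ S θ : ℝ) (hξ : ξ < 0) (hα : 0 < α) (hS : 0 < S)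
    (a a' : ℝ → ℝ)
    (h0 : a 0 = a₀) (ha₀ : 0 < a₀) (h1 : a' 0 = a₁)
    (hpos : ∀ s : ℝ, 0 ≤ s → s < S → 0 < a s)
    (hda : ∀ s : ℝ, 0 ≤ s → s < S → HasDerivAt a (a' s) s)
    (hode : ∀ s : ℝ, 0 ≤ s → s < S →
      HasDerivAt a' (ξ / (a s) ^ ((1:ℝ)/3)) s)
    (hlim : Filter.Tendsto a (nhdsWithin S (Set.Ico 0 S)) (nhds 0))
    (hθ : θ = a₁ ^ 2 / 2 - 3 / 2 * ξ * a₀ ^ ((2:ℝ)/3)) :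
    0 < θ ∧
    (∀ᶠ s in nhdsWithin S (Set.Ico 0 S), a s ≤ Real.sqrt (2 * θ) * (S - s)) ∧
    α / (2 * θ) ^ ((1:ℝ)/6) ≤
      Filter.liminf (fun s => α / (a s) ^ ((1:ℝ)/3) * (S - s) ^ ((1:ℝ)/3))
        (nhdsWithin S (Set.Ico 0 S)) ∧
    0 < α / (2 * θ) ^ ((1:ℝ)/6) := by
  subst h0 h1
  have hθ0 : 0 < θ := by
    have := Real.rpow_pos_of_pos ha₀ ((2:ℝ)/3)
    rw [hθ]
    nlinarith [sq_nonneg (a' 0), mul_pos (neg_pos.2 hξ) this]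
  have hdlow : ∀ s : ℝ, 0 ≤ s → s < S → -Real.sqrt (2 * θ) ≤ a' s := by
    intro s hs0 hsS
    have hE := energy_eq hpos hda hode hs0 hsS
    rw [← hθ] at hE
    have := Real.rpow_pos_of_pos (hpos s hs0 hsS) ((2:ℝ)/3)
    refine (abs_le.1 (Real.abs_le_sqrt ?_)).1
    nlinarith [mul_pos (neg_pos.2 hξ) this]
  have hup : ∀ s : ℝ, 0 ≤ s → s < S → a s ≤ Real.sqrt (2 * θ) * (S - s) :=
    fun s hs0 hsS => le_line_of_neg_le_deriv hS hda hlim hdlow hs0 hsS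
  have hconc : ConcaveOn ℝ (Ico 0 S) a := by
    refine concaveOn_of_hasDerivWithinAt2_nonpos (f' := a')
      (f'' := fun s => ξ / (a s) ^ ((1:ℝ)/3)) (convex_Ico 0 S)
      (fun t ht => (hda t ht.1 ht.2).continuousAt.continuousWithinAt)
      (fun t ht => ?_) (fun t ht => ?_) (fun t ht => ?_)
    all_goals have ht' := interior_subset ht
    · exact (hda t ht'.1 ht'.2).hasDerivWithinAt
    · exact (hode t ht'.1 ht'.2).hasDerivWithinAt
    · exact div_nonpos_of_nonpos_of_nonneg hξ.le (Real.rpow_nonneg (hpos t ht'.1 ht'.2).le _)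
  have hmem : ∀ᶠ s in 𝓝[Ico 0 S] S, s ∈ Ico 0 S := eventually_mem_nhdsWithin
  have hne : (𝓝[Ico 0 S] S).NeBot := by
    rw [nhdsWithin_Ico_eq_nhdsLT hS]; infer_instance
  have h6 : 0 < (2 * θ) ^ ((1:ℝ)/6) := Real.rpow_pos_of_pos (by linarith) _
  refine ⟨hθ0, hmem.mono fun s hs => hup s hs.1 hs.2, ?_, div_pos hα h6⟩
  refine le_liminf_of_le ?_ (hmem.mono fun s hs => ?_)
  -- The chord bound `S - s ≤ (S / a 0) * a s` bounds the function above.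
  · refine IsBoundedUnder.isCoboundedUnder_ge
      ⟨α * (S / a 0) ^ ((1:ℝ)/3), eventually_map.2 (hmem.mono fun s hs => ?_)⟩
    have hp := hpos s hs.1 hs.2
    have hc := chord_le_of_concaveOn hS hpos hconc hs.1 hs.2
    have hle : (S - s) ^ ((1:ℝ)/3) ≤ (S / a 0) ^ ((1:ℝ)/3) * a s ^ ((1:ℝ)/3) := by
      rw [← Real.mul_rpow (by positivity) hp.le]
      refine Real.rpow_le_rpow (by linarith [hs.2]) ?_ (by norm_num)
      rw [div_mul_eq_mul_div, le_div_iff₀ ha₀]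
      linarith
    have hr := Real.rpow_pos_of_pos hp ((1:ℝ)/3)
    change α / a s ^ ((1:ℝ)/3) * (S - s) ^ ((1:ℝ)/3) ≤ α * (S / a 0) ^ ((1:ℝ)/3)
    rw [div_mul_eq_mul_div, div_le_iff₀ hr, mul_assoc]
    exact mul_le_mul_of_nonneg_left hle hα.le
  · have hp := hpos s hs.1 hs.2
    have hr := Real.rpow_pos_of_pos hp ((1:ℝ)/3)
    have hle : a s ^ ((1:ℝ)/3) ≤ (2 * θ) ^ ((1:ℝ)/6) * (S - s) ^ ((1:ℝ)/3) := by
      have e : (2 * θ) ^ ((1:ℝ)/6) = (Real.sqrt (2 * θ)) ^ ((1:ℝ)/3) := by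
        rw [Real.sqrt_eq_rpow, ← Real.rpow_mul (by linarith)]; norm_num
      rw [e, ← Real.mul_rpow (Real.sqrt_nonneg _) (by linarith [hs.2])]
      exact Real.rpow_le_rpow hp.le (hup s hs.1 hs.2) (by norm_num)
    rw [div_mul_eq_mul_div, div_le_div_iff₀ h6 hr]
    calc α * a s ^ ((1:ℝ)/3) ≤ α * ((2 * θ) ^ ((1:ℝ)/6) * (S - s) ^ ((1:ℝ)/3)) :=
          mul_le_mul_of_nonneg_left hle hα.le
      _ = _ := by ring
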